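/- arXiv:1812.03255 — 3 statements merged into one kernel-verified Lean document; each statement's English description precedes it below -/
import Mathlib

section
/- Let l ≥ 1 and m ≥ 0 be integers. In the field K = 𝕜(x₁,…,x_l) of rational functions over a field 𝕜 of characteristic zero, the following identity holds: x_l^{m} + ∑_{i=1}^{l−1} (Dᵢ⁺ ∘ D_{i+1}⁺ ∘ ⋯ ∘ D_{l−1}⁺)(x_l^{m}) = ∑_{(q₁,…,q_l)} ∏_{j : qⱼ > 0} xⱼ^{qⱼ−1}, where the right-hand sum is over all tuples (q₁,…,q_l) of nonnegative integers with q₁ + ⋯ + q_l = m + 1, and the product is over those indices j with qⱼ > 0 (an empty product being 1). In particular, both sides lie in the polynomial subring 𝕜[x₁,…,x_l]. -/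
noncomputable section

open MvPolynomial

/-- The `i`-th variable `xᵢ`, regarded as an element of the field `K` of rational
functions (the fraction field of `MvPolynomial (Fin l) 𝕜`). -/
def ratVar (𝕜 : Type*) [Field 𝕜] (n : ℕ) (K : Type*) [Field K]
    [Algebra (MvPolynomial (Fin n) 𝕜) K] (i : Fin n) : K :=
  algebraMap (MvPolynomial (Fin n) 𝕜) K (X i)

/-- The `𝕜`-linear operator `f ↦ s f + (f - s f) * c⁻¹` (that is, `s + ∂` where
`∂ f = (f - s f)/c`). -/
def demazurePlusAux (𝕜 : Type*) [Field 𝕜] (K : Type*) [Field K] [Algebra 𝕜 K]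
    (s : K ≃ₐ[𝕜] K) (c : K) : Module.End 𝕜 K :=
  s.toLinearMap + (LinearMap.mulRight 𝕜 c⁻¹) ∘ₗ ((LinearMap.id : K →ₗ[𝕜] K) - s.toLinearMap)

/-- The operator `Dᵢ⁺ = sᵢ + ∂ᵢ` (0-indexed variables). -/
def DPlus (𝕜 : Type*) [Field 𝕜] {n : ℕ} (K : Type*) [Field K] [Algebra 𝕜 K]
    [Algebra (MvPolynomial (Fin n) 𝕜) K]
    (s : Equiv.Perm (Fin n) → (K ≃ₐ[𝕜] K)) (i : ℕ) (hi : i + 1 < n) : Module.End 𝕜 K :=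
  demazurePlusAux 𝕜 K (s (Equiv.swap ⟨i, Nat.lt_of_succ_lt hi⟩ ⟨i + 1, hi⟩))
    (ratVar 𝕜 n K ⟨i + 1, hi⟩ - ratVar 𝕜 n K ⟨i, Nat.lt_of_succ_lt hi⟩)

/-- The operator `Dᵢ⁺`, extended by the identity for indices `i` out of range (it is
only ever used below for in-range indices). -/
def DPlusTotal (𝕜 : Type*) [Field 𝕜] {n : ℕ} (K : Type*) [Field K] [Algebra 𝕜 K]
    [Algebra (MvPolynomial (Fin n) 𝕜) K]
    (s : Equiv.Perm (Fin n) → (K ≃ₐ[𝕜] K)) (i : ℕ) : Module.End 𝕜 K :=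
  if hi : i + 1 < n then DPlus 𝕜 K s i hi else 1

/-!
Write `g a = ∑ aⁿ tⁿ = (1 - a t)⁻¹`, so that `x_l ^ m` is the coefficient of `t ^ m` in `g x_l`.
Let `Dᵢ⁺` act coefficientwise on power series in `t`. It is linear over series fixed by `sᵢ`, and
`g b - g a = (b - a) t (g a) (g b)` shows that it sends `g xᵢ₊₁` to `g xᵢ * (1 + t * g xᵢ₊₁)`. Hence
`Dᵢ⁺ ∘ ⋯ ∘ D_{l-1}⁺` sends `g x_l` to `g xᵢ * ∏_{j > i} (1 + t * g xⱼ)`. After multiplication by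
`t`, the sum of these products over `i` telescopes to `∏ⱼ (1 + t * g xⱼ) - 1`, and
`1 + t * g x = ∑_q x ^ (q - 1) t ^ q`, where `x ^ (q - 1)` is read as `1` for `q = 0`.
-/

open Finset
open scoped PowerSeries

theorem prod_map_range_smul_of_step {M α : Type*} [Monoid M] [MulAction M α] (D : ℕ → M)
    (v : ℕ → α) (i n : ℕ) (hstep : ∀ t < n, D (i + t) • v (i + t + 1) = v (i + t)) :
    ((List.range n).map fun t => D (i + t)).prod • v (i + n) = v i := by
  induction n with
  | zero => simp
  | succ n ih =>
    rw [List.prod_range_succ, mul_smul, ← add_assoc, hstep n n.lt_succ_self]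
    exact ih fun t ht => hstep t (ht.trans n.lt_succ_self)

theorem one_add_sum_mul_prod_Ico {R : Type*} [CommSemiring R] (f : ℕ → R) (n : ℕ) :
    1 + ∑ i ∈ range n, f i * ∏ j ∈ Ico (i + 1) n, (1 + f j) = ∏ j ∈ range n, (1 + f j) := by
  induction n with
  | zero => simp
  | succ n ih =>
    have hsum : ∑ i ∈ range n, f i * ∏ j ∈ Ico (i + 1) (n + 1), (1 + f j) =
        (∑ i ∈ range n, f i * ∏ j ∈ Ico (i + 1) n, (1 + f j)) * (1 + f n) := by
      rw [sum_mul]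
      refine sum_congr rfl fun i hi => ?_
      rw [prod_Ico_succ_top (mem_range.mp hi), mul_assoc]
    rw [sum_range_succ, hsum, Ico_self, prod_empty, prod_range_succ, ← ih]
    ring

theorem coeff_prod_eq_sum_fin {ι R : Type*} [Fintype ι] [DecidableEq ι] [CommSemiring R]
    (f : ι → R⟦X⟧) (d : ℕ) :
    PowerSeries.coeff d (∏ j, f j) =
      ∑ q : ι → Fin (d + 1) with ∑ j, (q j : ℕ) = d, ∏ j, PowerSeries.coeff (q j) (f j) := by
  rw [PowerSeries.coeff_prod]
  symm
  refine sum_bij (fun q _ => Finsupp.equivFunOnFinite.symm fun j => (q j : ℕ)) ?_ ?_ ?_ ?_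
  · intro q hq
    simpa [mem_finsuppAntidiag] using hq
  · intro p _ q _ hpq
    funext j
    exact Fin.ext (congrFun (Finsupp.equivFunOnFinite.symm.injective hpq) j)
  · intro f hf
    have hsum : ∑ j, f j = d := (mem_finsuppAntidiag.mp hf).1
    have hlt (j : ι) : f j < d + 1 :=
      Nat.lt_succ_of_le (hsum ▸ single_le_sum_of_canonicallyOrdered (mem_univ j))
    exact ⟨fun j => ⟨f j, hlt j⟩, by simpa using hsum, by ext j; simp⟩
  · intro q _
    simp

/-- The geometric series `∑ aⁿ tⁿ = (1 - a t)⁻¹`, the generating function of the powers of `a`. -/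
def geomSeries {R : Type*} [Semiring R] (a : R) : R⟦X⟧ :=
  PowerSeries.mk fun n => a ^ n

theorem coeff_geomSeries {R : Type*} [Semiring R] (a : R) (n : ℕ) :
    PowerSeries.coeff n (geomSeries a) = a ^ n :=
  PowerSeries.coeff_mk _ _

theorem map_geomSeries {R S : Type*} [Semiring R] [Semiring S] (φ : R →+* S) (a : R) :
    PowerSeries.map φ (geomSeries a) = geomSeries (φ a) := by
  ext n
  simp only [PowerSeries.coeff_map, coeff_geomSeries, map_pow]

theorem geomSeries_mul_one_sub {R : Type*} [CommRing R] (a : R) :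
    geomSeries a * (1 - PowerSeries.C a * PowerSeries.X) = 1 := by
  have h := congrArg (PowerSeries.rescale a) (PowerSeries.mk_one_mul_one_sub_eq_one R)
  simpa [PowerSeries.rescale_mk, geomSeries, PowerSeries.rescale_X] using h

theorem geomSeries_sub_geomSeries {R : Type*} [CommRing R] (a b : R) :
    geomSeries b - geomSeries a =
      PowerSeries.C (b - a) * (PowerSeries.X * geomSeries a * geomSeries b) := by
  rw [map_sub]
  linear_combination geomSeries a * geomSeries_mul_one_sub b -
    geomSeries b * geomSeries_mul_one_sub a

theorem coeff_one_add_X_mul_geomSeries {R : Type*} [Semiring R] (a : R) (n : ℕ) :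
    PowerSeries.coeff n (1 + PowerSeries.X * geomSeries a) =
      if 0 < n then a ^ (n - 1) else 1 := by
  cases n with
  | zero => simp
  | succ n => simp [PowerSeries.coeff_succ_X_mul, coeff_geomSeries, PowerSeries.coeff_one]

theorem coeff_prod_one_add_X_mul_geomSeries {ι R : Type*} [Fintype ι] [DecidableEq ι]
    [CommSemiring R] (x : ι → R) (d : ℕ) :
    PowerSeries.coeff d (∏ j, (1 + PowerSeries.X * geomSeries (x j))) =
      ∑ q : ι → Fin (d + 1) with ∑ j, (q j : ℕ) = d,
        ∏ j with 0 < (q j : ℕ), x j ^ ((q j : ℕ) - 1) := by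
  simp only [coeff_prod_eq_sum_fin, coeff_one_add_X_mul_geomSeries, prod_filter]

section ChainSeries

variable {R : Type*} [CommSemiring R] (x : ℕ → R)

/-- The generating function in `m` of `(Dᵢ⁺ ∘ ⋯ ∘ D_{l-2}⁺) (x_{l-1} ^ m)`, in the `0`-indexed
numbering. The variables are given as a sequence on `ℕ`, so that `i + 1` needs no bound; only the
terms of index `< l` matter when `i < l`. -/
def chainSeries (l i : ℕ) : R⟦X⟧ :=
  geomSeries (x i) * ∏ j ∈ Ico (i + 1) l, (1 + PowerSeries.X * geomSeries (x j))

theorem coeff_chainSeries_last (k m : ℕ) :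
    PowerSeries.coeff m (chainSeries x (k + 1) k) = x k ^ m := by
  rw [chainSeries, Ico_self, prod_empty, mul_one, coeff_geomSeries]

theorem one_add_X_mul_sum_chainSeries (l : ℕ) :
    1 + PowerSeries.X * ∑ i ∈ range l, chainSeries x l i =
      ∏ j ∈ range l, (1 + PowerSeries.X * geomSeries (x j)) := by
  simp only [← one_add_sum_mul_prod_Ico, chainSeries, mul_sum, mul_assoc]

theorem sum_coeff_chainSeries (l m : ℕ) :
    ∑ i ∈ range l, PowerSeries.coeff m (chainSeries x l i) =
      PowerSeries.coeff (m + 1) (∏ j ∈ range l, (1 + PowerSeries.X * geomSeries (x j))) := by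
  rw [← one_add_X_mul_sum_chainSeries, map_add, PowerSeries.coeff_succ_X_mul,
    PowerSeries.coeff_one, if_neg m.succ_ne_zero, zero_add, map_sum]

end ChainSeries

section Demazure

variable {𝕜 K : Type*} [Field 𝕜] [Field K] [Algebra 𝕜 K]

theorem demazurePlusAux_apply_of_sub_eq_mul (s : K ≃ₐ[𝕜] K) {c f r : K} (hc : c ≠ 0)
    (hf : f - s f = c * r) : demazurePlusAux 𝕜 K s c f = s f + r := by
  simp only [demazurePlusAux, LinearMap.add_apply, LinearMap.comp_apply, LinearMap.sub_apply,
    LinearMap.id_apply, AlgEquiv.toLinearMap_apply, LinearMap.mulRight_apply, hf]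
  field_simp

theorem demazurePlusAux_coeff_geomSeries_mul (s : K ≃ₐ[𝕜] K) {a b : K} (hab : a ≠ b)
    (hs : s b = a) {A : K⟦X⟧} (hA : PowerSeries.map (s : K →+* K) A = A) (m : ℕ) :
    demazurePlusAux 𝕜 K s (b - a) (PowerSeries.coeff m (geomSeries b * A)) =
      PowerSeries.coeff m (geomSeries a * ((1 + PowerSeries.X * geomSeries b) * A)) := by
  have hmap : s (PowerSeries.coeff m (geomSeries b * A)) =
      PowerSeries.coeff m (geomSeries a * A) := by
    have h := PowerSeries.coeff_map (s : K →+* K) m (geomSeries b * A)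
    rw [map_mul, map_geomSeries, hA] at h
    simpa only [RingHom.coe_coe, hs] using h.symm
  have hsub : PowerSeries.coeff m (geomSeries b * A) - s (PowerSeries.coeff m (geomSeries b * A)) =
      (b - a) * PowerSeries.coeff m (PowerSeries.X * geomSeries a * geomSeries b * A) := by
    rw [hmap, ← map_sub, ← sub_mul, geomSeries_sub_geomSeries, mul_assoc, PowerSeries.coeff_C_mul]
  rw [demazurePlusAux_apply_of_sub_eq_mul s (sub_ne_zero.mpr hab.symm) hsub, hmap, ← map_add]
  congr 1
  ring

theorem DPlusTotal_coeff_chainSeries {l : ℕ} [Algebra (MvPolynomial (Fin l) 𝕜) K]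
    (hinj : Function.Injective (ratVar 𝕜 l K)) (s : Equiv.Perm (Fin l) → (K ≃ₐ[𝕜] K))
    (hs : ∀ (σ : Equiv.Perm (Fin l)) (i : Fin l), s σ (ratVar 𝕜 l K i) = ratVar 𝕜 l K (σ i))
    (x : ℕ → K) (hx : ∀ j : Fin l, x j = ratVar 𝕜 l K j) (m : ℕ) {i : ℕ} (hi : i + 1 < l) :
    DPlusTotal 𝕜 K s i (PowerSeries.coeff m (chainSeries x l (i + 1))) =
      PowerSeries.coeff m (chainSeries x l i) := by
  set a : Fin l := ⟨i, Nat.lt_of_succ_lt hi⟩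
  set b : Fin l := ⟨i + 1, hi⟩
  have hab : a ≠ b := by simp [a, b]
  have hfix : PowerSeries.map (s (Equiv.swap a b) : K →+* K)
      (∏ j ∈ Ico (i + 1 + 1) l, (1 + PowerSeries.X * geomSeries (x j))) =
      ∏ j ∈ Ico (i + 1 + 1) l, (1 + PowerSeries.X * geomSeries (x j)) := by
    rw [map_prod]
    refine prod_congr rfl fun j hj => ?_
    obtain ⟨hij, hjl⟩ := mem_Ico.mp hj
    have hxj : s (Equiv.swap a b) (x j) = x j := by
      have hja : (⟨j, hjl⟩ : Fin l) ≠ a := Fin.ne_of_val_ne (show j ≠ i by omega)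
      have hjb : (⟨j, hjl⟩ : Fin l) ≠ b := Fin.ne_of_val_ne (show j ≠ i + 1 by omega)
      rw [hx ⟨j, hjl⟩, hs, Equiv.swap_apply_of_ne_of_ne hja hjb]
    rw [map_add, map_one, map_mul, PowerSeries.map_X, map_geomSeries, RingHom.coe_coe, hxj]
  rw [DPlusTotal, dif_pos hi, DPlus, chainSeries, chainSeries, prod_eq_prod_Ico_succ_bot hi,
    hx a, hx b]
  exact demazurePlusAux_coeff_geomSeries_mul _ (hinj.ne hab)
    (by rw [hs, Equiv.swap_apply_right]) hfix m

theorem DPlusTotal_chain_pow {l : ℕ} [Algebra (MvPolynomial (Fin l) 𝕜) K]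
    (hinj : Function.Injective (ratVar 𝕜 l K)) (s : Equiv.Perm (Fin l) → (K ≃ₐ[𝕜] K))
    (hs : ∀ (σ : Equiv.Perm (Fin l)) (i : Fin l), s σ (ratVar 𝕜 l K i) = ratVar 𝕜 l K (σ i))
    (x : ℕ → K) (hx : ∀ j : Fin l, x j = ratVar 𝕜 l K j) (m : ℕ) {i k : ℕ} (hik : i ≤ k)
    (hkl : k + 1 = l) :
    ((List.range (k - i)).map fun t => DPlusTotal 𝕜 K s (i + t)).prod (x k ^ m) =
      PowerSeries.coeff m (chainSeries x l i) := by
  obtain ⟨n, rfl⟩ := Nat.exists_eq_add_of_le hik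
  rw [Nat.add_sub_cancel_left, ← coeff_chainSeries_last, hkl]
  exact prod_map_range_smul_of_step (DPlusTotal 𝕜 K s)
    (fun j => PowerSeries.coeff m (chainSeries x l j)) i n
    fun t ht => DPlusTotal_coeff_chainSeries hinj s hs x hx m (by omega)

theorem pow_add_sum_DPlusTotal_chain_pow {l : ℕ} (hl : 1 ≤ l) [Algebra (MvPolynomial (Fin l) 𝕜) K]
    (hinj : Function.Injective (ratVar 𝕜 l K)) (s : Equiv.Perm (Fin l) → (K ≃ₐ[𝕜] K))
    (hs : ∀ (σ : Equiv.Perm (Fin l)) (i : Fin l), s σ (ratVar 𝕜 l K i) = ratVar 𝕜 l K (σ i))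
    (m : ℕ) :
    ratVar 𝕜 l K ⟨l - 1, Nat.sub_one_lt_of_lt hl⟩ ^ m +
        ∑ i ∈ range (l - 1),
          (((List.range (l - 1 - i)).map fun t => DPlusTotal 𝕜 K s (i + t)).prod)
            (ratVar 𝕜 l K ⟨l - 1, Nat.sub_one_lt_of_lt hl⟩ ^ m) =
      PowerSeries.coeff (m + 1) (∏ j, (1 + PowerSeries.X * geomSeries (ratVar 𝕜 l K j))) := by
  obtain ⟨k, rfl⟩ := Nat.exists_eq_add_of_le' hl
  let x : ℕ → K := Function.extend Fin.val (ratVar 𝕜 (k + 1) K) 0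
  have hx (j : Fin (k + 1)) : x j = ratVar 𝕜 (k + 1) K j := Fin.val_injective.extend_apply _ _ j
  have hlast : ratVar 𝕜 (k + 1) K ⟨k, k.lt_succ_self⟩ = x k := (hx (Fin.last k)).symm
  have hchain : ∀ i ∈ range k,
      ((List.range (k - i)).map fun t => DPlusTotal 𝕜 K s (i + t)).prod (x k ^ m) =
        PowerSeries.coeff m (chainSeries x (k + 1) i) := fun i hi =>
    DPlusTotal_chain_pow hinj s hs x hx m (mem_range.mp hi).le rfl
  simp only [Nat.add_sub_cancel, hlast, ← hx]
  rw [sum_congr rfl hchain, ← coeff_chainSeries_last, add_comm, ← sum_range_succ,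
    sum_coeff_chainSeries, prod_range]

end Demazure

theorem ratVar_injective (𝕜 : Type*) [Field 𝕜] (n : ℕ) (K : Type*) [Field K]
    [Algebra (MvPolynomial (Fin n) 𝕜) K] [FaithfulSMul (MvPolynomial (Fin n) 𝕜) K] :
    Function.Injective (ratVar 𝕜 n K) :=
  (FaithfulSMul.algebraMap_injective (MvPolynomial (Fin n) 𝕜) K).comp MvPolynomial.X_injective

theorem DPlus_chain_sum_on_power_general
    (𝕜 : Type*) [Field 𝕜] (l m : ℕ) (hl : 1 ≤ l)
    (K : Type*) [Field K] [Algebra 𝕜 K] [Algebra (MvPolynomial (Fin l) 𝕜) K]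
    (hinj : Function.Injective (ratVar 𝕜 l K))
    (s : Equiv.Perm (Fin l) → (K ≃ₐ[𝕜] K))
    (hs : ∀ (σ : Equiv.Perm (Fin l)) (i : Fin l), s σ (ratVar 𝕜 l K i) = ratVar 𝕜 l K (σ i)) :
    (ratVar 𝕜 l K ⟨l - 1, Nat.sub_one_lt_of_lt hl⟩ ^ m +
        ∑ i ∈ range (l - 1),
          (((List.range (l - 1 - i)).map fun t => DPlusTotal 𝕜 K s (i + t)).prod)
            (ratVar 𝕜 l K ⟨l - 1, Nat.sub_one_lt_of_lt hl⟩ ^ m) =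
      ∑ q ∈ univ.filter (fun q : Fin l → Fin (m + 2) => (∑ j, (q j : ℕ)) = m + 1),
        ∏ j ∈ univ.filter fun j : Fin l => 0 < (q j : ℕ),
          ratVar 𝕜 l K j ^ ((q j : ℕ) - 1)) ∧
    (ratVar 𝕜 l K ⟨l - 1, Nat.sub_one_lt_of_lt hl⟩ ^ m +
        ∑ i ∈ range (l - 1),
          (((List.range (l - 1 - i)).map fun t => DPlusTotal 𝕜 K s (i + t)).prod)
            (ratVar 𝕜 l K ⟨l - 1, Nat.sub_one_lt_of_lt hl⟩ ^ m)) ∈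
      Set.range (algebraMap (MvPolynomial (Fin l) 𝕜) K) := by
  rw [pow_add_sum_DPlusTotal_chain_pow hl hinj s hs, coeff_prod_one_add_X_mul_geomSeries]
  exact ⟨rfl, sum_mem (S := (algebraMap (MvPolynomial (Fin l) 𝕜) K).range) fun q _ =>
    prod_mem fun j _ => pow_mem (RingHom.mem_range_self _ _) _⟩

/-- For `l ≥ 1`, `m ≥ 0`, in `K = 𝕜(x₁,…,x_l)`:
`x_l^{m} + ∑_{i=1}^{l−1} (Dᵢ⁺ ∘ ⋯ ∘ D_{l−1}⁺)(x_l^{m})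
  = ∑_{(q₁,…,q_l)} ∏_{j : qⱼ>0} xⱼ^{qⱼ−1}`,
the sum being over tuples of nonnegative integers with `q₁ + ⋯ + q_l = m + 1` (every
such tuple has all entries `≤ m + 1`, so they are faithfully enumerated by the filtered
finite set below).  In particular both sides lie in the polynomial subring
`𝕜[x₁,…,x_l]`, i.e. in the image of the polynomial ring in `K`.  Everything here is
`0`-indexed, and the composite `Dᵢ⁺ ∘ ⋯ ∘ D_{l−1}⁺` is the `List.prod` (= composition)
of the indicated operators. -/
theorem DPlus_chain_sum_on_power
    (𝕜 : Type*) [Field 𝕜] [CharZero 𝕜] (l m : ℕ) (hl : 1 ≤ l)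
    (K : Type*) [Field K] [Algebra 𝕜 K] [Algebra (MvPolynomial (Fin l) 𝕜) K]
    [IsScalarTower 𝕜 (MvPolynomial (Fin l) 𝕜) K]
    [IsFractionRing (MvPolynomial (Fin l) 𝕜) K]
    (s : Equiv.Perm (Fin l) → (K ≃ₐ[𝕜] K))
    (hs : ∀ (σ : Equiv.Perm (Fin l)) (i : Fin l), s σ (ratVar 𝕜 l K i) = ratVar 𝕜 l K (σ i)) :
    (ratVar 𝕜 l K ⟨l - 1, by omega⟩ ^ m +
        ∑ i ∈ Finset.range (l - 1),
          (((List.range (l - 1 - i)).map fun t => DPlusTotal 𝕜 K s (i + t)).prod)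
            (ratVar 𝕜 l K ⟨l - 1, by omega⟩ ^ m) =
      ∑ q ∈ Finset.univ.filter (fun q : Fin l → Fin (m + 2) => (∑ j, (q j : ℕ)) = m + 1),
        ∏ j ∈ Finset.univ.filter fun j : Fin l => 0 < (q j : ℕ),
          ratVar 𝕜 l K j ^ ((q j : ℕ) - 1)) ∧
    (ratVar 𝕜 l K ⟨l - 1, by omega⟩ ^ m +
        ∑ i ∈ Finset.range (l - 1),
          (((List.range (l - 1 - i)).map fun t => DPlusTotal 𝕜 K s (i + t)).prod)
            (ratVar 𝕜 l K ⟨l - 1, by omega⟩ ^ m)) ∈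
      Set.range (algebraMap (MvPolynomial (Fin l) 𝕜) K) :=
  DPlus_chain_sum_on_power_general 𝕜 l m hl K (ratVar_injective 𝕜 l K) s hs
end
end

section
/- Let 𝕜 be a field of characteristic zero and n ≥ 1. Inside the polynomial ring P = 𝕜[x₁,…,xₙ], let U = U₁ + ⋯ + U_{n−1}, where Uᵢ = {f ∈ P : sᵢ(f) = f} is the subspace of polynomials invariant under swapping xᵢ and x_{i+1} (equivalently, the kernel of the i-th Demazure operator ∂ᵢ on P), and let W = { g · x₁^{n−1} x₂^{n−2} ⋯ x_{n−1} : g ∈ P symmetric } be the set of products of symmetric polynomials with the staircase monomial x^ρ, ρ = (n−1, n−2, …, 1, 0). Then P is the internal direct sum of the 𝕜-subspaces U and W: U ∩ W = 0 and U + W = P. -/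
open MvPolynomial

/-!
Antisymmetrization kills every polynomial fixed by a transposition, is linear over the symmetric
polynomials, and sends `x^ρ` to the Vandermonde determinant up to sign. That determinant is not a
zero divisor, so `U ∩ W = 0`.

For `U + W = P`, note that `f + sᵢ f` is fixed by `sᵢ`, so permuting variables only changes the
class of `f` modulo `U` by a sign, and a monomial with two equal adjacent exponents lies in `U`.
It remains to treat `x^(ρ + μ)` with `μ` a partition. If `μ ≠ 0`, remove the first column of its
diagram, of height `k`, to get `ν`. Expanding `e_k x^(ρ + ν)` as in the Pieri rule gives
`x^(ρ + μ)` and, besides terms with two equal adjacent exponents, only monomials `x^(ρ + κ)` with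
`κ` a lexicographically smaller partition, so induction applies. No division by integers occurs.
-/

section Exponents

theorem toLex_add_indicator_lt {ι : Type*} [LinearOrder ι] {s t : Finset ι}
    (hs : IsLowerSet (s : Set ι)) (hcard : t.card = s.card) (hne : t ≠ s) (a : ι → ℕ) :
    toLex (a + (t : Set ι).indicator 1) < toLex (a + (s : Set ι).indicator 1) := by
  have hst : (s \ t).Nonempty := by
    rw [Finset.sdiff_nonempty]
    exact fun h ↦ hne (Finset.eq_of_subset_of_card_le h hcard.le).symm
  set i := (s \ t).min' hst
  have hi : i ∈ s ∧ i ∉ t := by simpa using (s \ t).min'_mem hst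
  refine ⟨i, fun j hj ↦ ?_, ?_⟩
  · have hjs : j ∈ s := hs hj.le hi.1
    have hjt : j ∈ t := by
      by_contra hjt
      exact hj.not_ge ((s \ t).min'_le j (by simp [hjs, hjt]))
    simp [hjs, hjt]
  · simp [hi]

theorem exists_lt_add_indicator_eq_of_antitone {ι : Type*} [Preorder ι] [Finite ι] {μ : ι → ℕ}
    (hμ : Antitone μ) (hμ0 : μ ≠ 0) :
    ∃ (ν : ι → ℕ) (s : Finset ι), Antitone ν ∧ IsLowerSet (s : Set ι) ∧ ν < μ ∧
      ν + (s : Set ι).indicator 1 = μ := by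
  have hadd : μ - 1 + ({i | μ i ≠ 0} : Set ι).indicator 1 = μ := by
    ext i
    by_cases hi : μ i = 0
    · simp [hi]
    · simpa [hi] using Nat.sub_add_cancel (Nat.pos_of_ne_zero hi)
  refine ⟨μ - 1, (Set.toFinite {i | μ i ≠ 0}).toFinset,
    fun i j hij ↦ Nat.sub_le_sub_right (hμ hij) 1, ?_, ?_, ?_⟩
  · intro i j hji hi
    simp only [Set.Finite.coe_toFinset, Set.mem_ofPred_eq] at hi ⊢
    exact (hi.bot_lt.trans_le (hμ hji)).ne'
  · obtain ⟨i, hi⟩ := Function.ne_iff.mp hμ0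
    exact Pi.lt_def.mpr ⟨tsub_le_self, i, Nat.sub_lt (Nat.pos_of_ne_zero hi) one_pos⟩
  · simpa using hadd

/-- The exponent vector `ρ = (n - 1, n - 2, …, 1, 0)` of the staircase monomial. -/
def staircase (n : ℕ) (i : Fin n) : ℕ := n - 1 - i

theorem staircase_eq_add_one_of_covBy {n : ℕ} {i j : Fin n} (hij : i ⋖ j) :
    staircase n i = staircase n j + 1 := by
  have := Nat.covBy_iff_add_one_eq.mp (Fin.covBy_iff.mp hij)
  simp only [staircase]
  omega

theorem staircase_le_of_strictAnti {n : ℕ} {a : Fin n → ℕ} (ha : StrictAnti a) :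
    staircase n ≤ a := by
  intro i
  have hmaps : Set.MapsTo a (Finset.Ioi i) (Finset.range (a i)) := by
    intro j hj
    simpa using ha (Finset.mem_Ioi.mp hj)
  simpa [staircase] using Finset.card_le_card_of_injOn a hmaps ha.injective.injOn

theorem exists_antitone_staircase_add_eq {n : ℕ} {a : Fin n → ℕ} (ha : StrictAnti a) :
    ∃ μ : Fin n → ℕ, Antitone μ ∧ staircase n + μ = a := by
  refine ⟨a - staircase n, ?_, add_tsub_cancel_of_le (staircase_le_of_strictAnti ha)⟩
  rw [antitone_iff_forall_covBy]
  intro i j hij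
  have h₁ := ha hij.lt
  have h₂ := staircase_eq_add_one_of_covBy hij
  simp only [Pi.sub_apply]
  omega

theorem antitone_add_indicator_or_exists_covBy {n : ℕ} {ν : Fin n → ℕ} (hν : Antitone ν)
    (t : Set (Fin n)) :
    Antitone (ν + t.indicator 1) ∨
      ∃ i j, i ⋖ j ∧ (staircase n + (ν + t.indicator 1) : Fin n → ℕ) i =
        (staircase n + (ν + t.indicator 1) : Fin n → ℕ) j := by
  by_contra! h
  refine h.1 ((antitone_iff_forall_covBy _).mpr fun i j hij ↦ ?_)
  have hne := h.2 i j hij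
  have hstep := staircase_eq_add_one_of_covBy hij
  have hle := hν hij.le
  have hind : t.indicator (1 : Fin n → ℕ) j ≤ 1 := Set.indicator_apply_le' (by simp) (by simp)
  simp only [Pi.add_apply] at hne ⊢
  omega

theorem exists_perm_antitone_comp {α : Type*} [LinearOrder α] {n : ℕ} (a : Fin n → α) :
    ∃ e : Equiv.Perm (Fin n), Antitone (a ∘ e) :=
  ⟨Tuple.sort (OrderDual.toDual ∘ a), Tuple.monotone_sort (OrderDual.toDual ∘ a)⟩

end Exponents

section Monomials

variable {σ R : Type*} [CommSemiring R] [Fintype σ]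

theorem rename_prod_X_pow (e : Equiv.Perm σ) (a : σ → ℕ) :
    rename e (∏ i, X i ^ (a ∘ e) i : MvPolynomial σ R) = ∏ i, X i ^ a i := by
  simp only [map_prod, map_pow, rename_X, Function.comp_apply]
  exact Equiv.prod_comp e fun i ↦ (X i : MvPolynomial σ R) ^ a i

theorem esymm_mul_prod_X_pow (k : ℕ) (a : σ → ℕ) :
    esymm σ R k * ∏ i, X i ^ a i =
      ∑ t ∈ Finset.powersetCard k (Finset.univ : Finset σ),
        ∏ i, X i ^ (a + (t : Set σ).indicator 1 : σ → ℕ) i := by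
  classical
  rw [esymm, Finset.sum_mul]
  refine Finset.sum_congr rfl fun t _ ↦ ?_
  have ht : ∏ i ∈ t, (X i : MvPolynomial σ R) = ∏ i, X i ^ (t : Set σ).indicator 1 i := by
    simp [Set.indicator_apply, pow_ite]
  rw [ht, mul_comm, ← Finset.prod_mul_distrib]
  simp only [Pi.add_apply, pow_add]

theorem eq_top_of_forall_prod_X_pow_mem {V : Submodule R (MvPolynomial σ R)}
    (hV : ∀ a : σ → ℕ, ∏ i, X i ^ a i ∈ V) : V = ⊤ := by
  refine eq_top_iff.mpr fun f _ ↦ ?_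
  induction f using MvPolynomial.induction_on' with
  | monomial a c =>
    rw [monomial_eq, Finsupp.prod_fintype _ _ fun _ ↦ pow_zero _, ← smul_eq_C_mul]
    exact V.smul_mem c (hV a)
  | add p q hp hq => exact V.add_mem (hp trivial) (hq trivial)

end Monomials

section Antisymmetrization

variable {σ R : Type*} [CommRing R]

section

variable [Fintype σ] [DecidableEq σ]

variable (σ R) in
/-- The antisymmetrization operator `f ↦ ∑ τ, sign τ • τ f`, as an `R`-linear map. -/
noncomputable def antisymmetrize : MvPolynomial σ R →ₗ[R] MvPolynomial σ R :=
  ∑ τ : Equiv.Perm σ, Equiv.Perm.sign τ • (rename τ).toLinearMap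

theorem antisymmetrize_apply (f : MvPolynomial σ R) :
    antisymmetrize σ R f = ∑ τ : Equiv.Perm σ, Equiv.Perm.sign τ • rename τ f := by
  simp [antisymmetrize]

theorem antisymmetrize_mul_of_isSymmetric {g : MvPolynomial σ R} (hg : g.IsSymmetric)
    (f : MvPolynomial σ R) : antisymmetrize σ R (g * f) = g * antisymmetrize σ R f := by
  simp only [antisymmetrize_apply, Finset.mul_sum, map_mul, hg _, mul_smul_comm]

theorem antisymmetrize_eq_zero_of_rename_swap_eq {i j : σ} (hij : i ≠ j) {f : MvPolynomial σ R}
    (hf : rename (Equiv.swap i j) f = f) : antisymmetrize σ R f = 0 := by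
  rw [antisymmetrize_apply]
  -- Pairing `τ` with `τ * swap i j` avoids the division by `2` in the usual argument.
  refine Finset.sum_involution (fun τ _ ↦ τ * Equiv.swap i j) (fun τ _ ↦ ?_)
    (fun τ _ _ ↦ (not_congr Equiv.mul_swap_eq_iff).mpr hij) (fun _ _ ↦ Finset.mem_univ _)
    (fun τ _ ↦ Equiv.mul_swap_mul_self i j τ)
  rw [Equiv.Perm.sign_mul, Equiv.Perm.sign_swap hij, Equiv.Perm.coe_mul, ← rename_rename, hf,
    mul_neg_one, Units.neg_smul, add_neg_cancel]

end

theorem isRegular_X_sub_X {i j : σ} (hij : i ≠ j) :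
    IsRegular (X i - X j : MvPolynomial σ R) := by
  classical
  let shear : MvPolynomial σ R →ₐ[R] MvPolynomial σ R := aeval (Function.update X i (X i + X j))
  let unshear : MvPolynomial σ R →ₐ[R] MvPolynomial σ R := aeval (Function.update X i (X i - X j))
  have hinv : unshear.comp shear = AlgHom.id R _ := by
    ext k : 1
    rcases eq_or_ne k i with rfl | hk <;> simp [shear, unshear, *, hij.symm]
  have hinj : Function.Injective shear :=
    Function.LeftInverse.injective (g := unshear) (DFunLike.congr_fun hinv)
  have hshear : shear (X i - X j) = X i := by simp [shear, hij.symm]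
  rw [isRegular_iff_mem_nonZeroDivisors]
  refine mem_nonZeroDivisors_of_injective hinj ?_
  rw [hshear]
  exact isRegular_X.mem_nonZeroDivisors

theorem isRegular_det_vandermonde_X (n : ℕ) :
    IsRegular (Matrix.vandermonde (X : Fin n → MvPolynomial (Fin n) R)).det := by
  rw [Matrix.det_vandermonde]
  exact IsRegular.prod fun i _ ↦ IsRegular.prod fun j hj ↦
    isRegular_X_sub_X (Finset.mem_Ioi.mp hj).ne'

theorem antisymmetrize_staircase (n : ℕ) :
    antisymmetrize (Fin n) R (∏ i, X i ^ staircase n i) =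
      Equiv.Perm.sign (Fin.revPerm (n := n)) •
        (Matrix.vandermonde (X : Fin n → MvPolynomial (Fin n) R)).det := by
  rw [Units.smul_def, zsmul_eq_mul, ← Matrix.det_permute', Matrix.det_apply, antisymmetrize_apply]
  refine Finset.sum_congr rfl fun τ _ ↦ ?_
  congr 1
  simp only [map_prod, map_pow, rename_X, Matrix.submatrix_apply, Matrix.vandermonde_apply, id,
    Fin.revPerm_apply, Fin.val_rev, staircase, Nat.sub_sub, add_comm]

theorem isRegular_antisymmetrize_staircase (n : ℕ) :
    IsRegular (antisymmetrize (Fin n) R (∏ i, X i ^ staircase n i)) := by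
  rw [antisymmetrize_staircase, Units.smul_def, zsmul_eq_mul]
  exact (((Equiv.Perm.sign _).isUnit.map (Int.castRingHom _)).isRegular).mul
    (isRegular_det_vandermonde_X n)

end Antisymmetrization

section Decomposition

variable (R : Type*) [CommRing R] (n : ℕ)

/-- The sum `U = U₁ + ⋯ + U_{n-1}`, where `Uᵢ` consists of the polynomials fixed by the adjacent
transposition `sᵢ`. -/
noncomputable def adjacentInvariants : Submodule R (MvPolynomial (Fin n) R) :=
  ⨆ (i : ℕ) (hi : i + 1 < n),
    LinearMap.ker
      ((rename (Equiv.swap (⟨i, Nat.lt_of_succ_lt hi⟩ : Fin n) ⟨i + 1, hi⟩)).toLinearMap -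
        (LinearMap.id : MvPolynomial (Fin n) R →ₗ[R] MvPolynomial (Fin n) R))

/-- The space `W = {g · x^ρ : g symmetric}` of symmetric multiples of the staircase monomial. -/
noncomputable def staircaseMultiples : Submodule R (MvPolynomial (Fin n) R) :=
  Submodule.map (LinearMap.mulRight R (∏ i, X i ^ staircase n i))
    (Subalgebra.toSubmodule (symmetricSubalgebra (Fin n) R))

variable {R n}

theorem adjacentInvariants_le_iff {V : Submodule R (MvPolynomial (Fin n) R)} :
    adjacentInvariants R n ≤ V ↔
      ∀ i j : Fin n, i ⋖ j → ∀ f, rename (Equiv.swap i j) f = f → f ∈ V := by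
  rw [adjacentInvariants, iSup₂_le_iff]
  simp only [SetLike.le_def, LinearMap.mem_ker, LinearMap.sub_apply, AlgHom.toLinearMap_apply,
    LinearMap.id_apply, sub_eq_zero, Fin.covBy_iff, Nat.covBy_iff_add_one_eq]
  constructor
  · rintro h i ⟨j, hj⟩ rfl f hf
    exact h i hj hf
  · exact fun h i hi f hf ↦ h ⟨i, _⟩ ⟨i + 1, hi⟩ rfl f hf

theorem mem_adjacentInvariants_of_rename_swap_eq {i j : Fin n} (hij : i ⋖ j)
    {f : MvPolynomial (Fin n) R} (hf : rename (Equiv.swap i j) f = f) :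
    f ∈ adjacentInvariants R n :=
  adjacentInvariants_le_iff.mp le_rfl i j hij f hf

theorem prod_X_pow_mem_adjacentInvariants {a : Fin n → ℕ} {i j : Fin n} (hij : i ⋖ j)
    (ha : a i = a j) : (∏ k, X k ^ a k : MvPolynomial (Fin n) R) ∈ adjacentInvariants R n := by
  have hcomp : a ∘ Equiv.swap i j = a := funext (Equiv.apply_swap_eq_self ha)
  refine mem_adjacentInvariants_of_rename_swap_eq hij ?_
  conv_lhs => rw [← hcomp]
  exact rename_prod_X_pow _ a

theorem rename_mem_of_adjacentInvariants_le {V : Submodule R (MvPolynomial (Fin n) R)}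
    (hV : adjacentInvariants R n ≤ V) (e : Equiv.Perm (Fin n)) {f : MvPolynomial (Fin n) R}
    (hf : f ∈ V) : rename e f ∈ V := by
  obtain _ | m := n
  · simpa [Subsingleton.elim e 1] using hf
  have he : e ∈ Submonoid.closure (Set.range fun i : Fin m ↦ Equiv.swap i.castSucc i.succ) := by
    simp [Equiv.Perm.mclosure_swap_castSucc_succ]
  induction he using Submonoid.closure_induction_left with
  | one => simpa using hf
  | mul_left s hs e _ ih =>
    obtain ⟨i, rfl⟩ := hs
    have hfixed : rename e f + rename (Equiv.swap i.castSucc i.succ) (rename e f) ∈ V := by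
      refine hV (mem_adjacentInvariants_of_rename_swap_eq (i := i.castSucc) (j := i.succ)
        (by simp) ?_)
      rw [map_add, rename_rename _ _ (rename e f), ← Equiv.Perm.coe_mul, Equiv.swap_mul_self,
        Equiv.Perm.coe_one, rename_id_apply]
      exact add_comm _ _
    rw [Equiv.Perm.coe_mul, ← rename_rename]
    exact (V.add_mem_iff_right ih).mp hfixed

theorem antisymmetrize_eq_zero_of_mem_adjacentInvariants {f : MvPolynomial (Fin n) R}
    (hf : f ∈ adjacentInvariants R n) : antisymmetrize (Fin n) R f = 0 := by
  have hle : adjacentInvariants R n ≤ LinearMap.ker (antisymmetrize (Fin n) R) :=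
    adjacentInvariants_le_iff.mpr fun _ _ hij _ ↦ antisymmetrize_eq_zero_of_rename_swap_eq hij.ne
  exact hle hf

theorem mul_mem_adjacentInvariants_sup_staircaseMultiples {g f : MvPolynomial (Fin n) R}
    (hg : g.IsSymmetric) (hf : f ∈ adjacentInvariants R n ⊔ staircaseMultiples R n) :
    g * f ∈ adjacentInvariants R n ⊔ staircaseMultiples R n := by
  suffices h : adjacentInvariants R n ⊔ staircaseMultiples R n ≤
      (adjacentInvariants R n ⊔ staircaseMultiples R n).comap (LinearMap.mulLeft R g) from h hf
  refine sup_le (adjacentInvariants_le_iff.mpr fun i j hij p hp ↦ ?_) ?_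
  · refine Submodule.mem_sup_left (mem_adjacentInvariants_of_rename_swap_eq hij ?_)
    rw [LinearMap.mulLeft_apply, map_mul, hg, hp]
  · rintro _ ⟨h, hh, rfl⟩
    exact Submodule.mem_sup_right ⟨g * h, IsSymmetric.mul hg hh, mul_assoc _ _ _⟩

theorem prod_X_pow_staircase_add_mem {μ : Fin n → ℕ} (hμ : Antitone μ) :
    (∏ i, X i ^ (staircase n + μ) i : MvPolynomial (Fin n) R) ∈
      adjacentInvariants R n ⊔ staircaseMultiples R n := by
  induction hm : toLex μ using WellFoundedLT.induction generalizing μ with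
  | ind m ih =>
  subst hm
  by_cases hμ0 : μ = 0
  · subst hμ0
    exact Submodule.mem_sup_right ⟨1, IsSymmetric.one, by simp⟩
  obtain ⟨ν, s, hν, hs, hνμ, hμν⟩ := exists_lt_add_indicator_eq_of_antitone hμ hμ0
  have hpieri := mul_mem_adjacentInvariants_sup_staircaseMultiples
    (esymm_isSymmetric (Fin n) R s.card) (ih _ (Pi.toLex_strictMono hνμ) hν rfl)
  rw [esymm_mul_prod_X_pow, ← Finset.add_sum_erase _ _
    (Finset.mem_powersetCard.mpr ⟨Finset.subset_univ s, rfl⟩)] at hpieri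
  simp only [add_assoc, hμν] at hpieri
  refine (Submodule.add_mem_iff_left _ (Submodule.sum_mem _ fun t ht ↦ ?_)).mp hpieri
  obtain ⟨hts, ht⟩ := Finset.mem_erase.mp ht
  have hlt := toLex_add_indicator_lt hs (Finset.mem_powersetCard.mp ht).2 hts ν
  rw [hμν] at hlt
  rcases antitone_add_indicator_or_exists_covBy hν (t : Set (Fin n)) with hanti | ⟨i, j, hij, heq⟩
  · exact ih _ hlt hanti rfl
  · exact Submodule.mem_sup_left (prod_X_pow_mem_adjacentInvariants hij heq)

variable (R n)

theorem adjacentInvariants_inf_staircaseMultiples :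
    adjacentInvariants R n ⊓ staircaseMultiples R n = ⊥ := by
  rw [eq_bot_iff]
  rintro _ ⟨hU, g, hg, rfl⟩
  have hzero := antisymmetrize_eq_zero_of_mem_adjacentInvariants hU
  rw [LinearMap.mulRight_apply, antisymmetrize_mul_of_isSymmetric hg] at hzero
  have hg0 : g = 0 :=
    (isRegular_antisymmetrize_staircase n).right.mul_right_eq_zero_iff.mp hzero
  simp [hg0]

theorem adjacentInvariants_sup_staircaseMultiples :
    adjacentInvariants R n ⊔ staircaseMultiples R n = ⊤ := by
  refine eq_top_of_forall_prod_X_pow_mem fun a ↦ ?_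
  obtain ⟨e, hanti⟩ := exists_perm_antitone_comp a
  rw [← rename_prod_X_pow e a]
  refine rename_mem_of_adjacentInvariants_le le_sup_left e ?_
  by_cases hstrict : StrictAnti (a ∘ e)
  · obtain ⟨μ, hμ, hμe⟩ := exists_antitone_staircase_add_eq hstrict
    rw [← hμe]
    exact prod_X_pow_staircase_add_mem hμ
  · rw [strictAnti_iff_forall_covBy] at hstrict
    push Not at hstrict
    obtain ⟨i, j, hij, hle⟩ := hstrict
    exact Submodule.mem_sup_left
      (prod_X_pow_mem_adjacentInvariants hij (hle.antisymm (hanti hij.le)))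

theorem polynomialRing_direct_sum_nonsymmetric_staircase_general :
    IsCompl (adjacentInvariants R n) (staircaseMultiples R n) :=
  IsCompl.of_eq (adjacentInvariants_inf_staircaseMultiples R n)
    (adjacentInvariants_sup_staircaseMultiples R n)

end Decomposition

/-- Let `𝕜` be a field of characteristic zero and `n ≥ 1`.  Inside
the polynomial ring `P = 𝕜[x₁,…,xₙ]`, let `U = U₁ + ⋯ + U_{n−1}` where
`Uᵢ = {f : sᵢ f = f}` is the fixed subspace of the transposition of `xᵢ` and `xᵢ₊₁`
(equivalently, the kernel of the `i`-th Demazure operator), and let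
`W = {g · x^ρ : g symmetric}` with `x^ρ = x₁^{n−1} x₂^{n−2} ⋯ x_{n−1}` the staircase
monomial.  Then `P` is the internal direct sum of the `𝕜`-subspaces `U` and `W`:
`U ∩ W = 0` and `U + W = P`.  (Everything is `0`-indexed below.) -/
theorem polynomialRing_direct_sum_nonsymmetric_staircase
    (𝕜 : Type*) [Field 𝕜] [CharZero 𝕜] (n : ℕ) (hn : 1 ≤ n)
    (U W : Submodule 𝕜 (MvPolynomial (Fin n) 𝕜))
    (hU : U = ⨆ (i : ℕ) (hi : i + 1 < n),
      LinearMap.ker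
        ((MvPolynomial.rename
            (⇑(Equiv.swap (⟨i, Nat.lt_of_succ_lt hi⟩ : Fin n) ⟨i + 1, hi⟩))).toLinearMap -
          (LinearMap.id : MvPolynomial (Fin n) 𝕜 →ₗ[𝕜] MvPolynomial (Fin n) 𝕜)))
    (hW : W = Submodule.map
        (LinearMap.mulRight 𝕜
          (∏ i : Fin n, (X i : MvPolynomial (Fin n) 𝕜) ^ (n - 1 - (i : ℕ))))
        (Subalgebra.toSubmodule (MvPolynomial.symmetricSubalgebra (Fin n) 𝕜))) :
    U ⊓ W = ⊥ ∧ U ⊔ W = ⊤ := by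
  subst hU hW
  have h := polynomialRing_direct_sum_nonsymmetric_staircase_general 𝕜 n
  exact ⟨h.inf_eq_bot, h.sup_eq_top⟩
end

section
/- Let 𝕜 be an algebraically closed field, V a finite-dimensional 𝕜-vector space, and f, g commuting 𝕜-linear endomorphisms of V (f∘g = g∘f). If no eigenvalue of f is also an eigenvalue of g (i.e. the sets of eigenvalues of f and of g are disjoint), then f − g is an invertible endomorphism of V. -/
/-!
Work in an arbitrary algebra, with commuting elements `a` and `b`. If `p` is the minimal polynomial
of `a`, then `a - b` divides `p(a) - p(b) = -p(b)`. When `p` splits, `p(b)` is a product of factors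
`b - c` with `c` a root of `p`; such a `c` lies in the spectrum of `a`, hence not in that of `b`, so
every factor is invertible.
-/

open Polynomial

section CommRing

variable {R A : Type*} [CommRing R] [Ring A] [Algebra R A] {a b : A} {p : R[X]}

open scoped IsMulCommutative in
theorem exists_commute_mul_eq_aeval_sub_aeval (hab : Commute a b) (p : R[X]) :
    ∃ d : A, Commute (a - b) d ∧ (a - b) * d = aeval a p - aeval b p := by
  let S := Algebra.adjoin R {a, b}
  have hS : IsMulCommutative S := Algebra.isMulCommutative_adjoin R <| by
    rintro x (rfl | rfl) y (rfl | rfl)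
    exacts [rfl, hab, hab.symm, rfl]
  let a' : S := ⟨a, Algebra.subset_adjoin (by simp)⟩
  let b' : S := ⟨b, Algebra.subset_adjoin (by simp)⟩
  obtain ⟨d, hd⟩ : a' - b' ∣ aeval a' p - aeval b' p := by
    simpa only [eval_map_algebraMap] using sub_dvd_eval_sub a' b' (p.map (algebraMap R S))
  refine ⟨d, (Commute.all (a' - b') d).map S.val, ?_⟩
  calc (a - b) * d = S.val (aeval a' p - aeval b' p) := congrArg S.val hd.symm
    _ = aeval a p - aeval b p := by
      rw [map_sub, ← aeval_algHom_apply, ← aeval_algHom_apply]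
      rfl

theorem isUnit_sub_of_isUnit_aeval (hab : Commute a b) (ha : aeval a p = 0)
    (hb : IsUnit (aeval b p)) : IsUnit (a - b) := by
  obtain ⟨d, hcomm, hd⟩ := exists_commute_mul_eq_aeval_sub_aeval hab p
  have hunit : IsUnit ((a - b) * d) := by simpa only [hd, ha, zero_sub] using hb.neg
  exact (hcomm.isUnit_mul_iff.mp hunit).1

theorem mem_spectrum_of_isRoot_minpoly [Nontrivial R] (ha : IsIntegral R a) {c : R}
    (hc : (minpoly R a).IsRoot c) : c ∈ spectrum R a := by
  obtain ⟨q, hq⟩ := dvd_iff_isRoot.mpr hc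
  have hq_monic : q.Monic := (monic_X_sub_C c).of_mul_monic_left (hq ▸ minpoly.monic ha)
  have hq_aeval : aeval a q ≠ 0 := minpoly.aeval_ne_zero_of_dvdNotUnit_minpoly ha hq_monic
    ⟨hq_monic.ne_zero, X - C c, not_isUnit_X_sub_C c, hq.trans (mul_comm _ _)⟩
  rw [spectrum.mem_iff, IsUnit.sub_iff]
  intro hunit
  have hmul : (a - algebraMap R A c) * aeval a q = 0 := by
    simpa only [hq, map_mul, map_sub, aeval_X, aeval_C] using minpoly.aeval R a
  exact hq_aeval (hunit.mul_right_eq_zero.mp hmul)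

end CommRing

section IsDomain

variable {R A : Type*} [CommRing R] [IsDomain R] [Ring A] [Algebra R A] {a b : A}

theorem isUnit_aeval_of_splits {p : R[X]} (hp : p.Monic) (hsplits : p.Splits)
    (hb : ∀ c ∈ spectrum R b, ¬p.IsRoot c) : IsUnit (aeval b p) := by
  rw [hsplits.eq_prod_roots_of_monic hp]
  by_contra hunit
  obtain ⟨c, hc, hroot⟩ := spectrum.exists_mem_of_not_isUnit_aeval_prod hunit
  exact hb c hc hroot

theorem sub_isUnit_of_commute_of_disjoint_eigenvalues_general (hab : Commute a b)
    (ha : IsIntegral R a) (hsplits : (minpoly R a).Splits)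
    (hdisj : Disjoint (spectrum R a) (spectrum R b)) : IsUnit (a - b) := by
  refine isUnit_sub_of_isUnit_aeval hab (minpoly.aeval R a) ?_
  refine isUnit_aeval_of_splits (minpoly.monic ha) hsplits fun c hcb hroot ↦ ?_
  exact Set.disjoint_left.mp hdisj (mem_spectrum_of_isRoot_minpoly ha hroot) hcb

end IsDomain

/-- Let `𝕜` be an algebraically closed field, `V` a finite-dimensional
`𝕜`-vector space, and `f, g` commuting endomorphisms of `V`.  If no eigenvalue of `f`
is also an eigenvalue of `g`, then `f − g` is an invertible endomorphism of `V`. -/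
theorem sub_isUnit_of_commute_of_disjoint_eigenvalues
    (𝕜 : Type*) [Field 𝕜] [IsAlgClosed 𝕜]
    (V : Type*) [AddCommGroup V] [Module 𝕜 V] [FiniteDimensional 𝕜 V]
    (f g : Module.End 𝕜 V) (hfg : f * g = g * f)
    (h : ∀ c : 𝕜, ¬(Module.End.HasEigenvalue f c ∧ Module.End.HasEigenvalue g c)) :
    IsUnit (f - g) := by
  simp only [Module.End.hasEigenvalue_iff_mem_spectrum] at h
  exact sub_isUnit_of_commute_of_disjoint_eigenvalues_general (R := 𝕜) hfg
    (Algebra.IsIntegral.isIntegral f) (IsAlgClosed.splits _)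
    (Set.disjoint_left.mpr fun c hf hg ↦ h c ⟨hf, hg⟩)
end
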